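/- arXiv:2009.10240 — 2 statements merged into one kernel-verified Lean document; each statement's English description precedes it below -/
import Mathlib

section
/- Let P be a normal program over a set A of propositional atoms and let (P_b, P_t) be a splitting of P. If I ⊆ A is an answer set of P, then there exists an answer set I_b of P_b such that I is an answer set of the program P_t ∪ I_b. -/
/-- A rule of a normal logic program: a head (`none` represents `⊥`, i.e. a
constraint), a finite set of positive body atoms and a finite set of negated
body atoms.  The type `α` is the set of propositional atoms. -/
structure NRule (α : Type*) where
  head : Option α
  pos : Finset α
  neg : Finset α

namespace NRule

/-- The atoms occurring (in the head or in the body) of a rule. -/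
def atoms {α : Type*} (r : NRule α) : Set α :=
  {a | r.head = some a} ∪ ↑r.pos ∪ ↑r.neg

end NRule

/-- A normal program is a set of rules. -/
abbrev NProgram (α : Type*) := Set (NRule α)

/-- A rule survives into (and is kept, with its negative body removed, in) the
reduct `P^I` iff its negated body is disjoint from `I`. -/
def InReduct {α : Type*} (I : Set α) (r : NRule α) : Prop :=
  ∀ a ∈ r.neg, a ∉ I

/-- `J` is closed under the (positive parts of the) atom-headed rules of the
reduct `P^I`: whenever such a rule has its positive body inside `J`, its head
atom is in `J`. -/
def ClosedUnder {α : Type*} (P : NProgram α) (I J : Set α) : Prop :=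
  ∀ r ∈ P, InReduct I r → ∀ a : α, r.head = some a → ↑r.pos ⊆ J → a ∈ J

/-- `I` is an answer set of `P`: (i) `I` is the least set closed under the
atom-headed rules of the reduct `P^I`, and (ii) no `⊥`-headed rule of the
reduct `P^I` has its positive body inside `I`. -/
def IsAnswerSet {α : Type*} (P : NProgram α) (I : Set α) : Prop :=
  (ClosedUnder P I I ∧ ∀ J : Set α, ClosedUnder P I J → I ⊆ J) ∧
    ¬ ∃ r ∈ P, InReduct I r ∧ r.head = none ∧ ↑r.pos ⊆ I

/-- A set `S` of atoms identified with the set of facts `{a ← . : a ∈ S}`. -/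
def facts {α : Type*} (S : Set α) : NProgram α :=
  {r | ∃ a ∈ S, r = ⟨some a, ∅, ∅⟩}

/-- `(Pb, Pt)` is a splitting (of `Pb ∪ Pt`): no atom occurring in `Pb` is the
head of a rule of `Pt`. -/
def IsSplitting {α : Type*} (Pb Pt : NProgram α) : Prop :=
  ∀ a : α, (∃ r ∈ Pb, a ∈ r.atoms) → ¬ ∃ r ∈ Pt, r.head = some a

/-!
Let `U` contain the atoms of the bottom program and avoid the heads of the top program; the bottom
answer set is `I ∩ U`. The bottom program cannot tell `I` from `I ∩ U`. If `J` is closed under the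
bottom reduct, then `Uᶜ ∪ J` is closed under the whole reduct, since the top program only derives
atoms in `Uᶜ`; minimality of `I` then gives `I ⊆ Uᶜ ∪ J`, that is `I ∩ U ⊆ J`.

For the top part, all that the bottom program contributes to the derivation of `I` are heads of its
rules that lie in `I`. These may be supplied as facts instead.
-/

section

variable {α : Type*} {P Q : NProgram α} {I J K S U : Set α}

namespace NRule

theorem pos_subset_atoms (r : NRule α) : ↑r.pos ⊆ r.atoms :=
  fun _ ha => .inl (.inr ha)

theorem neg_subset_atoms (r : NRule α) : ↑r.neg ⊆ r.atoms :=
  fun _ ha => .inr ha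

end NRule

namespace NProgram

/-- The atoms occurring in a program, in the head or in the body of a rule. -/
def atoms (P : NProgram α) : Set α :=
  ⋃ r ∈ P, r.atoms

/-- The atoms a program can derive: the heads of its rules, constraints contributing none. -/
def heads (P : NProgram α) : Set α :=
  {a | ∃ r ∈ P, r.head = some a}

theorem atoms_subset_of_mem {r : NRule α} (hr : r ∈ P) : r.atoms ⊆ P.atoms :=
  Set.subset_biUnion_of_mem (u := NRule.atoms) hr

theorem heads_subset_atoms (P : NProgram α) : P.heads ⊆ P.atoms := by
  rintro a ⟨r, hr, ha⟩
  exact atoms_subset_of_mem hr (.inl (.inl ha))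

end NProgram

theorem isSplitting_iff_disjoint : IsSplitting P Q ↔ Disjoint P.atoms Q.heads := by
  simp [IsSplitting, Set.disjoint_left, NProgram.atoms, NProgram.heads]

theorem inReduct_inter_iff {r : NRule α} (hU : ↑r.neg ⊆ U) :
    InReduct (I ∩ U) r ↔ InReduct I r :=
  forall₂_congr fun _ ha => not_congr (and_iff_left (hU ha))

theorem closedUnder_union_iff :
    ClosedUnder (P ∪ Q) I J ↔ ClosedUnder P I J ∧ ClosedUnder Q I J :=
  forall₂_or_left

theorem closedUnder_facts_iff : ClosedUnder (facts S) I J ↔ S ⊆ J := by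
  constructor
  · intro h a ha
    exact h ⟨some a, ∅, ∅⟩ ⟨a, ha, rfl⟩ (by simp [InReduct]) a rfl (by simp)
  · rintro hSJ _ ⟨a, ha, rfl⟩ - _ ⟨⟩ -
    exact hSJ ha

theorem closedUnder_of_heads_subset (h : P.heads ⊆ J) : ClosedUnder P I J :=
  fun r hr _ _ ha _ => h ⟨r, hr, ha⟩

theorem ClosedUnder.inter (hJ : ClosedUnder P I J) (hK : ClosedUnder P I K) :
    ClosedUnder P I (J ∩ K) := by
  intro r hr hred a ha hpos
  obtain ⟨hposJ, hposK⟩ := Set.subset_inter_iff.1 hpos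
  exact ⟨hJ r hr hred a ha hposJ, hK r hr hred a ha hposK⟩

theorem ClosedUnder.of_heads_inter_subset (hK : ClosedUnder P I K) (hJK : J ⊆ K)
    (hheads : P.heads ∩ K ⊆ J) : ClosedUnder P I J :=
  fun r hr hred a ha hpos => hheads ⟨⟨r, hr, ha⟩, hK r hr hred a ha (hpos.trans hJK)⟩

theorem closedUnder_inter_left_iff (hU : P.atoms ⊆ U) :
    ClosedUnder P (I ∩ U) J ↔ ClosedUnder P I J := by
  refine forall₂_congr fun r hr => ?_
  have hrU : r.atoms ⊆ U := (NProgram.atoms_subset_of_mem hr).trans hU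
  rw [inReduct_inter_iff (r.neg_subset_atoms.trans hrU)]

theorem closedUnder_inter_right_iff (hU : P.atoms ⊆ U) :
    ClosedUnder P I (J ∩ U) ↔ ClosedUnder P I J := by
  refine forall₅_congr fun r hr _ a ha => ?_
  have hrU : r.atoms ⊆ U := (NProgram.atoms_subset_of_mem hr).trans hU
  have haU : a ∈ U := hU (P.heads_subset_atoms ⟨r, hr, ha⟩)
  simp [Set.subset_inter_iff, r.pos_subset_atoms.trans hrU, haU]

theorem ClosedUnder.compl_union (hJ : ClosedUnder P I J) (hU : P.atoms ⊆ U) :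
    ClosedUnder P I (Uᶜ ∪ J) := by
  have hinter : (Uᶜ ∪ J) ∩ U = J ∩ U := by
    rw [Set.union_inter_distrib_right, Set.compl_inter_self, Set.empty_union]
  rw [← closedUnder_inter_right_iff hU, hinter]
  exact (closedUnder_inter_right_iff hU).2 hJ

/-- `I` violates no constraint (`⊥`-headed rule) of the reduct `P^I`. This is condition (ii) in the
definition of an answer set. -/
def SatisfiesConstraints (P : NProgram α) (I : Set α) : Prop :=
  ∀ r ∈ P, InReduct I r → r.head = none → ¬ ↑r.pos ⊆ I

theorem isAnswerSet_iff_isLeast :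
    IsAnswerSet P I ↔ IsLeast {J | ClosedUnder P I J} I ∧ SatisfiesConstraints P I := by
  simp [IsAnswerSet, IsLeast, lowerBounds, SatisfiesConstraints]

theorem satisfiesConstraints_union_iff :
    SatisfiesConstraints (P ∪ Q) I ↔ SatisfiesConstraints P I ∧ SatisfiesConstraints Q I :=
  forall₂_or_left

theorem satisfiesConstraints_facts (S I : Set α) : SatisfiesConstraints (facts S) I := by
  rintro _ ⟨a, -, rfl⟩ - ⟨⟩

theorem satisfiesConstraints_inter_iff (hU : P.atoms ⊆ U) :
    SatisfiesConstraints P (I ∩ U) ↔ SatisfiesConstraints P I := by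
  refine forall₂_congr fun r hr => ?_
  have hrU : r.atoms ⊆ U := (NProgram.atoms_subset_of_mem hr).trans hU
  simp [inReduct_inter_iff (r.neg_subset_atoms.trans hrU), Set.subset_inter_iff,
    r.pos_subset_atoms.trans hrU]

theorem IsAnswerSet.inter_of_disjoint_heads (hI : IsAnswerSet (P ∪ Q) I) (hU : P.atoms ⊆ U)
    (hQ : Disjoint U Q.heads) : IsAnswerSet P (I ∩ U) := by
  obtain ⟨⟨hclosed, hleast⟩, hcons⟩ := isAnswerSet_iff_isLeast.1 hI
  refine isAnswerSet_iff_isLeast.2 ⟨⟨?closed, fun J hJ => ?least⟩, ?constraints⟩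
  case closed =>
    have hclosedP : ClosedUnder P I I := (closedUnder_union_iff.1 hclosed).1
    exact (closedUnder_inter_left_iff hU).2 ((closedUnder_inter_right_iff hU).2 hclosedP)
  case least =>
    have hP : ClosedUnder P I (Uᶜ ∪ J) := ((closedUnder_inter_left_iff hU).1 hJ).compl_union hU
    have hheads : Q.heads ⊆ Uᶜ ∪ J := Set.subset_union_of_subset_left hQ.subset_compl_left J
    have hI_sub : I ⊆ Uᶜ ∪ J :=
      hleast (closedUnder_union_iff.2 ⟨hP, closedUnder_of_heads_subset hheads⟩)
    exact (Set.inter_subset I U J).2 hI_sub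
  case constraints =>
    exact (satisfiesConstraints_inter_iff hU).2 (satisfiesConstraints_union_iff.1 hcons).1

theorem IsAnswerSet.replace_left_by_facts (hI : IsAnswerSet (P ∪ Q) I) (hSI : S ⊆ I)
    (hheads : P.heads ∩ I ⊆ S) : IsAnswerSet (Q ∪ facts S) I := by
  obtain ⟨⟨hclosed, hleast⟩, hcons⟩ := isAnswerSet_iff_isLeast.1 hI
  obtain ⟨hclosedP, hclosedQ⟩ := closedUnder_union_iff.1 hclosed
  refine isAnswerSet_iff_isLeast.2 ⟨⟨?closed, fun J hJ => ?least⟩, ?constraints⟩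
  case closed =>
    exact closedUnder_union_iff.2 ⟨hclosedQ, closedUnder_facts_iff.2 hSI⟩
  case least =>
    obtain ⟨hJQ, hJfacts⟩ := closedUnder_union_iff.1 hJ
    have hSJ : S ⊆ J := closedUnder_facts_iff.1 hJfacts
    have hP : ClosedUnder P I (J ∩ I) :=
      hclosedP.of_heads_inter_subset Set.inter_subset_right
        (hheads.trans (Set.subset_inter hSJ hSI))
    have hI_sub : I ⊆ J ∩ I := hleast (closedUnder_union_iff.2 ⟨hP, hJQ.inter hclosedQ⟩)
    exact hI_sub.trans Set.inter_subset_left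
  case constraints =>
    exact satisfiesConstraints_union_iff.2
      ⟨(satisfiesConstraints_union_iff.1 hcons).2, satisfiesConstraints_facts S I⟩

end

/-- splitting theorem, downward direction.  If `(Pb, Pt)` is a
splitting of `P = Pb ∪ Pt` and `I` is an answer set of `P`, then there is an
answer set `Ib` of `Pb` such that `I` is an answer set of `Pt ∪ Ib` (with `Ib`
viewed as a set of facts). -/
theorem exists_bottom_answerSet_of_splitting {α : Type*} (P Pb Pt : NProgram α) (I : Set α)
    (hP : P = Pb ∪ Pt) (hsplit : IsSplitting Pb Pt)
    (hI : IsAnswerSet P I) :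
    ∃ Ib : Set α, IsAnswerSet Pb Ib ∧ IsAnswerSet (Pt ∪ facts Ib) I := by
  subst hP
  have hbottom : IsAnswerSet Pb (I ∩ Pb.atoms) :=
    hI.inter_of_disjoint_heads subset_rfl (isSplitting_iff_disjoint.1 hsplit)
  have hheads : Pb.heads ∩ I ⊆ I ∩ Pb.atoms :=
    fun _ ⟨ha, haI⟩ => ⟨haI, Pb.heads_subset_atoms ha⟩
  have htop : IsAnswerSet (Pt ∪ facts (I ∩ Pb.atoms)) I :=
    hI.replace_left_by_facts Set.inter_subset_left hheads
  exact ⟨I ∩ Pb.atoms, hbottom, htop⟩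
end

section
/- Let A be a set of propositional atoms, S ⊆ A, b a natural number, H ∈ A ∪ {⊥}, and B⁺, B⁻ finite subsets of A. Let P₁ be the c-program consisting of all c-rules with head H, positive body T ∪ B⁺, negated body B⁻, and no cardinality constraints, where T ranges over all b-element subsets of S; and let P₂ be the c-program consisting of the single c-rule with head H, positive body B⁺, negated body B⁻, and the single cardinality constraint (S, b). Then P₁ and P₂ are strongly equivalent: for every c-program R over A, the programs P₁ ∪ R and P₂ ∪ R have the same answer sets. (This is the ground-level form of the theorem that a rule naming b pairwise distinct objects X₁,…,X_b satisfying F, together with the inequations Xᵢ ≠ Xⱼ, is strongly equivalent to the rule using the aggregate literal b ≤ #count{X : F(X)}.) -/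
/-- A rule of a c-program: a head (`none` represents `⊥`), finite sets of
positive and negated body atoms, and a finite set of cardinality constraints,
each a pair `(S, b)` with `S` a set of atoms and `b : ℕ`.  The type `α` is the
set of propositional atoms. -/
structure CRule (α : Type*) where
  head : Option α
  pos : Finset α
  neg : Finset α
  agg : Finset (Set α × ℕ)

/-- A c-program is a set of c-rules. -/
abbrev CProgram (α : Type*) := Set (CRule α)

/-- A cardinality constraint `(S, b)` is satisfied by `J` if `J ∩ S` has at
least `b` elements. -/
def SatConstraint {α : Type*} (J : Set α) (c : Set α × ℕ) : Prop :=
  ∃ T : Finset α, ↑T ⊆ J ∩ c.1 ∧ c.2 ≤ T.card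

/-- A c-rule fires on `J` if its positive body is contained in `J` and every
one of its cardinality constraints is satisfied by `J`. -/
def CRule.Fires {α : Type*} (r : CRule α) (J : Set α) : Prop :=
  ↑r.pos ⊆ J ∧ ∀ c ∈ r.agg, SatConstraint J c

/-- A c-rule survives into (and is kept, with its negated body removed but its
positive body and cardinality constraints kept, in) the reduct `P^I` iff its
negated body is disjoint from `I`. -/
def CInReduct {α : Type*} (I : Set α) (r : CRule α) : Prop :=
  ∀ a ∈ r.neg, a ∉ I

/-- `J` is closed under the atom-headed rules of the reduct `P^I`: whenever
such a rule fires on `J`, its head atom is in `J`. -/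
def CClosedUnder {α : Type*} (P : CProgram α) (I J : Set α) : Prop :=
  ∀ r ∈ P, CInReduct I r → ∀ a : α, r.head = some a → r.Fires J → a ∈ J

/-- `I` is an answer set of the c-program `P`: (i) `I` is the least set closed
under the atom-headed rules of the reduct `P^I`, and (ii) no `⊥`-headed rule
of the reduct `P^I` fires on `I`. -/
def CIsAnswerSet {α : Type*} (P : CProgram α) (I : Set α) : Prop :=
  (CClosedUnder P I I ∧ ∀ J : Set α, CClosedUnder P I J → I ⊆ J) ∧
    ¬ ∃ r ∈ P, CInReduct I r ∧ r.head = none ∧ r.Fires I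

/-!
An answer set of `P` depends on `P` only through its immediate consequence operator, which sends a
reduct `P^I` and an interpretation `J` to the heads of the rules of `P^I` that fire on `J`. This
operator turns unions of programs into unions, so programs with the same operator are strongly
equivalent. For the counting rules the operators agree because `J ∩ S` has at least `b` elements
exactly when some `b`-element subset of `S` is contained in `J`.
-/

section

variable {α : Type*}

/-- The immediate consequence operator of the reduct `P^I`: the heads of those of its rules that
fire on `J`. The `⊥`-headed rules are included, contributing `none`, so that both clauses in the
definition of an answer set can be read off. -/
def CProgram.consequences (P : CProgram α) (I J : Set α) : Set (Option α) :=
  {o | ∃ r ∈ P, CInReduct I r ∧ r.head = o ∧ r.Fires J}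

/-- Strong equivalence of c-programs: they have the same answer sets in every context `R`. -/
def CProgram.StronglyEquivalent (P Q : CProgram α) : Prop :=
  ∀ R : CProgram α, ∀ I : Set α, CIsAnswerSet (P ∪ R) I ↔ CIsAnswerSet (Q ∪ R) I

namespace CProgram

theorem consequences_union (P Q : CProgram α) (I J : Set α) :
    consequences (P ∪ Q) I J = P.consequences I J ∪ Q.consequences I J := by
  ext o
  simp only [consequences, Set.mem_ofPred_eq, Set.mem_union, or_and_right, exists_or]

theorem cClosedUnder_iff_consequences {P : CProgram α} {I J : Set α} :
    CClosedUnder P I J ↔ ∀ a, some a ∈ P.consequences I J → a ∈ J :=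
  ⟨fun h a ⟨r, hr, hI, ha, hJ⟩ ↦ h r hr hI a ha hJ,
    fun h r hr hI a ha hJ ↦ h a ⟨r, hr, hI, ha, hJ⟩⟩

theorem cIsAnswerSet_iff_consequences {P : CProgram α} {I : Set α} :
    CIsAnswerSet P I ↔
      IsLeast {J | ∀ a, some a ∈ P.consequences I J → a ∈ J} I ∧
        none ∉ P.consequences I I := by
  simp only [CIsAnswerSet, cClosedUnder_iff_consequences]
  rfl

theorem StronglyEquivalent.of_consequences_eq {P Q : CProgram α}
    (h : ∀ I J, P.consequences I J = Q.consequences I J) : P.StronglyEquivalent Q := fun R I ↦ by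
  simp only [cIsAnswerSet_iff_consequences, consequences_union, h]

end CProgram

theorem satConstraint_iff_exists_card_eq {J S : Set α} {b : ℕ} :
    SatConstraint J (S, b) ↔ ∃ T : Finset α, ↑T ⊆ S ∧ T.card = b ∧ ↑T ⊆ J := by
  constructor
  · rintro ⟨U, hU, hb⟩
    obtain ⟨T, hTU, hT⟩ := Finset.exists_subset_card_eq hb
    have hTJS : ↑T ⊆ J ∩ S := (Finset.coe_subset.mpr hTU).trans hU
    exact ⟨T, hTJS.trans Set.inter_subset_right, hT, hTJS.trans Set.inter_subset_left⟩
  · rintro ⟨T, hTS, hT, hTJ⟩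
    exact ⟨T, Set.subset_inter hTJ hTS, hT.ge⟩

namespace CRule

theorem fires_union_pos_iff [DecidableEq α] {H : Option α} {T Bp Bn : Finset α}
    {C : Finset (Set α × ℕ)} {J : Set α} :
    (⟨H, T ∪ Bp, Bn, C⟩ : CRule α).Fires J ↔ ↑T ⊆ J ∧ (⟨H, Bp, Bn, C⟩ : CRule α).Fires J := by
  simp only [Fires, Finset.coe_union, Set.union_subset_iff, and_assoc]

theorem fires_insert_agg_iff [DecidableEq (Set α × ℕ)] {H : Option α} {Bp Bn : Finset α}
    {c : Set α × ℕ} {C : Finset (Set α × ℕ)} {J : Set α} :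
    (⟨H, Bp, Bn, insert c C⟩ : CRule α).Fires J ↔
      SatConstraint J c ∧ (⟨H, Bp, Bn, C⟩ : CRule α).Fires J := by
  simp only [Fires, Finset.forall_mem_insert, and_left_comm]

theorem fires_insert_agg_iff_exists [DecidableEq α] [DecidableEq (Set α × ℕ)] {H : Option α}
    {Bp Bn : Finset α} {S : Set α} {b : ℕ} {C : Finset (Set α × ℕ)} {J : Set α} :
    (⟨H, Bp, Bn, insert (S, b) C⟩ : CRule α).Fires J ↔
      ∃ T : Finset α, ↑T ⊆ S ∧ T.card = b ∧ (⟨H, T ∪ Bp, Bn, C⟩ : CRule α).Fires J := by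
  simp only [fires_insert_agg_iff, satConstraint_iff_exists_card_eq, fires_union_pos_iff,
    ← and_assoc, exists_and_right]

end CRule

theorem counting_aggregate_strong_equivalence_general [DecidableEq α] [DecidableEq (Set α × ℕ)]
    (S : Set α) (b : ℕ) (H : Option α) (Bp Bn : Finset α) (C : Finset (Set α × ℕ)) :
    CProgram.StronglyEquivalent
      {r | ∃ T : Finset α, ↑T ⊆ S ∧ T.card = b ∧ r = ⟨H, T ∪ Bp, Bn, C⟩}
      {⟨H, Bp, Bn, insert (S, b) C⟩} := by
  refine .of_consequences_eq fun I J ↦ Set.ext fun o ↦ ?_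
  constructor
  · rintro ⟨_, ⟨T, hTS, hT, rfl⟩, hI, ho, hJ⟩
    exact ⟨_, rfl, hI, ho, CRule.fires_insert_agg_iff_exists.mpr ⟨T, hTS, hT, hJ⟩⟩
  · rintro ⟨_, rfl, hI, ho, hJ⟩
    obtain ⟨T, hTS, hT, hTJ⟩ := CRule.fires_insert_agg_iff_exists.mp hJ
    exact ⟨_, ⟨T, hTS, hT, rfl⟩, hI, ho, hTJ⟩

end

/-- strong equivalence of explicit counting and the counting
aggregate, ground level.  Let `P₁` consist of all c-rules with head `H`,
positive body `T ∪ B⁺`, negated body `B⁻` and no cardinality constraints,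
where `T` ranges over all `b`-element subsets of `S`; and let `P₂` consist of
the single c-rule with head `H`, positive body `B⁺`, negated body `B⁻` and the
single cardinality constraint `(S, b)`.  Then `P₁` and `P₂` are strongly
equivalent: for every c-program `R`, `P₁ ∪ R` and `P₂ ∪ R` have the same
answer sets. -/
theorem counting_aggregate_strong_equivalence {α : Type*} [DecidableEq α]
    (S : Set α) (b : ℕ) (H : Option α) (Bp Bn : Finset α)
    (P₁ P₂ : CProgram α)
    (hP₁ : P₁ = {r | ∃ T : Finset α, ↑T ⊆ S ∧ T.card = b ∧
      r = ⟨H, T ∪ Bp, Bn, ∅⟩})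
    (hP₂ : P₂ = {(⟨H, Bp, Bn, {(S, b)}⟩ : CRule α)}) :
    ∀ R : CProgram α, ∀ I : Set α,
      CIsAnswerSet (P₁ ∪ R) I ↔ CIsAnswerSet (P₂ ∪ R) I := by
  classical
  rw [hP₁, hP₂, ← insert_empty_eq (S, b)]
  exact counting_aggregate_strong_equivalence_general S b H Bp Bn ∅
end
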